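/- arXiv:2504.11638 — 2 statements merged into one kernel-verified Lean document; each statement's English description precedes it below -/
import Mathlib

section
/- Let k ≥ 1 and let μ be the product of k copies of the uniform probability measure on [0,1]. Then for every real x with 0 ≤ x ≤ k, μ({u ∈ [0,1]^k : Σ_{i=1}^k u_i ≤ x}) = (1/k!) Σ_{j=0}^{⌊x⌋} (−1)^j C(k,j) (x − j)^k (the Irwin–Hall cumulative distribution function). -/
open MeasureTheory

/-- The uniform probability measure on the interval `[a,b]`. -/
noncomputable def unif (a b : ℝ) : Measure ℝ :=
  (volume (Set.Icc a b))⁻¹ • volume.restrict (Set.Icc a b)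

/-!
The distribution function `F k` of a sum of `k` uniform variables satisfies
`F (k + 1) x = ∫ t in (x - 1)..x, F k t`. The normalized truncated power `t₊ ^ (k + 1) / (k + 1)!`
is an antiderivative of `t₊ ^ k / k!`, and forward differences commute with taking antiderivatives.
Hence each such integration contributes one more forward difference, and `F k x` is the `k`-th
forward difference of `t₊ ^ k / k!` at `x - k`; expanding it binomially gives the formula.
-/

section FwdDiff

theorem fwdDiff_iter_sub_nsmul_eq_sum {M G : Type*} [AddCommGroup M] [AddCommGroup G]
    (h : M) (f : M → G) (n : ℕ) (y : M) :
    (fwdDiff h)^[n] f (y - n • h) =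
      ∑ j ∈ Finset.range (n + 1), ((-1 : ℤ) ^ j * n.choose j) • f (y - j • h) := by
  rw [fwdDiff_iter_eq_sum_shift, ← Finset.sum_flip]
  refine Finset.sum_congr rfl fun j hj => ?_
  have hjn : j ≤ n := Finset.mem_range_succ_iff.mp hj
  rw [Nat.sub_sub_self hjn, Nat.choose_symm hjn, sub_nsmul h hjn]
  congr 2
  abel

variable {E : Type*} [NormedAddCommGroup E] [NormedSpace ℝ E]

theorem integral_fwdDiff_iter_eq_sub {f g : ℝ → E}
    (hg : ∀ a b, IntervalIntegrable g volume a b) (hfg : ∀ a b, ∫ t in a..b, g t = f b - f a)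
    (h : ℝ) (n : ℕ) (a b : ℝ) :
    ∫ t in a..b, (fwdDiff h)^[n] g t = (fwdDiff h)^[n] f b - (fwdDiff h)^[n] f a := by
  induction n generalizing f g with
  | zero => exact hfg a b
  | succ _ ih =>
    have hg_shift (a b : ℝ) : IntervalIntegrable (fun t => g (t + h)) volume a b := by
      simpa using (hg (a + h) (b + h)).comp_add_right h
    refine ih (fun a b => (hg_shift a b).sub (hg a b)) fun a b => ?_
    calc ∫ t in a..b, fwdDiff h g t
        = (∫ t in a..b, g (t + h)) - ∫ t in a..b, g t :=
          intervalIntegral.integral_sub (hg_shift a b) (hg a b)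
      _ = (f (b + h) - f (a + h)) - (f b - f a) := by
          rw [intervalIntegral.integral_comp_add_right, hfg, hfg]
      _ = fwdDiff h f b - fwdDiff h f a := sub_sub_sub_comm _ _ _ _

end FwdDiff

/-- The normalized truncated power `t₊ ^ k / k!`, with the convention `0 ^ 0 = 1`, so that
`truncPow 0` is the distribution function of the empty sum. -/
noncomputable def truncPow (k : ℕ) : ℝ → ℝ :=
  (Set.Ici 0).indicator fun t => t ^ k / k.factorial

namespace truncPow

theorem of_nonneg (k : ℕ) {t : ℝ} (ht : 0 ≤ t) : truncPow k t = t ^ k / k.factorial :=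
  Set.indicator_of_mem ht _

theorem of_neg (k : ℕ) {t : ℝ} (ht : t < 0) : truncPow k t = 0 :=
  Set.indicator_of_notMem (Set.notMem_Ici.mpr ht) _

theorem monotone (k : ℕ) : Monotone (truncPow k) := by
  intro s t hst
  rcases lt_or_ge s 0 with hs | hs
  · rw [of_neg k hs]
    exact Set.indicator_nonneg (fun u (hu : 0 ≤ u) => by positivity) t
  · rw [of_nonneg k hs, of_nonneg k (hs.trans hst)]
    gcongr

theorem continuous_succ (k : ℕ) : Continuous (truncPow (k + 1)) :=
  Continuous.indicator (by simp) (by fun_prop)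

theorem hasDerivWithinAt_succ (k : ℕ) (t : ℝ) :
    HasDerivWithinAt (truncPow (k + 1)) (truncPow k t) (Set.Ioi t) t := by
  rcases lt_or_ge t 0 with ht | ht
  · have h_eventually_zero : truncPow (k + 1) =ᶠ[nhds t] fun _ => 0 :=
      (eventually_lt_nhds ht).mono fun s hs => of_neg (k + 1) hs
    rw [of_neg k ht]
    exact ((hasDerivAt_const t 0).congr_of_eventuallyEq h_eventually_zero).hasDerivWithinAt
  · have h_deriv : HasDerivAt (fun s : ℝ => s ^ (k + 1) / (k + 1).factorial)
        (truncPow k t) t := by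
      have h_coeff : truncPow k t = (k + 1 : ℕ) * t ^ k / (k + 1).factorial := by
        rw [of_nonneg k ht, Nat.factorial_succ, Nat.cast_mul, mul_div_mul_left _ _ (by positivity)]
      rw [h_coeff]
      exact (hasDerivAt_pow (k + 1) t).div_const ((k + 1).factorial : ℝ)
    exact h_deriv.hasDerivWithinAt.congr
      (fun s hs => of_nonneg (k + 1) (ht.trans (Set.mem_Ioi.mp hs).le)) (of_nonneg (k + 1) ht)

theorem integral_eq_sub (k : ℕ) (a b : ℝ) :
    ∫ t in a..b, truncPow k t = truncPow (k + 1) b - truncPow (k + 1) a :=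
  intervalIntegral.integral_eq_sub_of_hasDeriv_right (continuous_succ k).continuousOn
    (fun t _ => hasDerivWithinAt_succ k t) (monotone k).intervalIntegrable

end truncPow

section SumOfIndependent

variable {n : ℕ} (μ : Fin (n + 1) → Measure ℝ)

theorem measure_pi_sum_le_eq_lintegral [∀ i, SigmaFinite (μ i)] (x : ℝ) :
    Measure.pi μ {u | ∑ i, u i ≤ x} =
      ∫⁻ t, Measure.pi (fun i : Fin n => μ i.succ) {v | ∑ i, v i ≤ x - t} ∂μ 0 := by
  let S : Set (ℝ × (Fin n → ℝ)) := {p | p.1 + ∑ i, p.2 i ≤ x}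
  have hS : MeasurableSet S := measurableSet_le (by fun_prop) (by fun_prop)
  have h_preimage : MeasurableEquiv.piFinSuccAbove (fun _ => ℝ) 0 ⁻¹' S =
      {u : Fin (n + 1) → ℝ | ∑ i, u i ≤ x} := by
    ext u
    simp [S, Fin.sum_univ_succ, Fin.tail]
  rw [← h_preimage, (measurePreserving_piFinSuccAbove μ 0).measure_preimage hS.nullMeasurableSet,
    Measure.prod_apply hS]
  simp [S, le_sub_iff_add_le']

theorem measureReal_pi_sum_le_eq_integral [∀ i, IsFiniteMeasure (μ i)] (x : ℝ) :
    (Measure.pi μ).real {u | ∑ i, u i ≤ x} =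
      ∫ t, (Measure.pi fun i : Fin n => μ i.succ).real {v | ∑ i, v i ≤ x - t} ∂μ 0 := by
  have h_antitone : Antitone fun t : ℝ =>
      Measure.pi (fun i : Fin n => μ i.succ) {v | ∑ i, v i ≤ x - t} :=
    fun s t hst => measure_mono fun v (hv : _ ≤ x - t) => hv.trans (by gcongr)
  rw [measureReal_def, measure_pi_sum_le_eq_lintegral]
  exact (integral_toReal h_antitone.measurable.aemeasurable
    (.of_forall fun _ => measure_lt_top _ _)).symm

end SumOfIndependent

section Uniform

instance (a b : ℝ) : IsFiniteMeasure (unif a b) :=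
  inferInstanceAs (IsFiniteMeasure (ProbabilityTheory.cond volume (Set.Icc a b)))

theorem integral_unif {E : Type*} [NormedAddCommGroup E] [NormedSpace ℝ E] {a b : ℝ}
    (hab : a ≤ b) (f : ℝ → E) : ∫ t, f t ∂unif a b = (b - a)⁻¹ • ∫ t in a..b, f t := by
  rw [unif, integral_smul_measure, Real.volume_Icc, ENNReal.toReal_inv,
    ENNReal.toReal_ofReal (sub_nonneg.mpr hab), integral_Icc_eq_integral_Ioc,
    intervalIntegral.integral_of_le hab]

theorem measureReal_pi_unif_sum_le_eq_fwdDiff (k : ℕ) (x : ℝ) :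
    (Measure.pi fun _ : Fin k => unif 0 1).real {u | ∑ i, u i ≤ x} =
      (fwdDiff (1 : ℝ))^[k] (truncPow k) (x - k) := by
  induction k generalizing x with
  | zero =>
    rcases lt_or_ge x 0 with hx | hx
    · simp [truncPow.of_neg, hx, hx.not_ge]
    · simp [truncPow.of_nonneg, hx, measureReal_def]
  | succ k ih =>
    calc (Measure.pi fun _ : Fin (k + 1) => unif 0 1).real {u | ∑ i, u i ≤ x}
        = ∫ t in (0 : ℝ)..1, (fwdDiff (1 : ℝ))^[k] (truncPow k) (x - t - k) := by
          simp [measureReal_pi_sum_le_eq_integral, ih, integral_unif zero_le_one]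
      _ = ∫ t in (x - k - 1)..(x - k), (fwdDiff (1 : ℝ))^[k] (truncPow k) t := by
          simp_rw [sub_right_comm x _ (k : ℝ)]
          rw [intervalIntegral.integral_comp_sub_left ((fwdDiff (1 : ℝ))^[k] (truncPow k)),
            sub_zero]
      _ = (fwdDiff (1 : ℝ))^[k] (truncPow (k + 1)) (x - k) -
            (fwdDiff (1 : ℝ))^[k] (truncPow (k + 1)) (x - k - 1) :=
          integral_fwdDiff_iter_eq_sub (fun _ _ => (truncPow.monotone k).intervalIntegrable)
            (truncPow.integral_eq_sub k) 1 k _ _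
      _ = (fwdDiff (1 : ℝ))^[k + 1] (truncPow (k + 1)) (x - (k + 1 : ℕ)) := by
          rw [Function.iterate_succ_apply', fwdDiff, Nat.cast_succ, ← sub_sub, sub_add_cancel]

end Uniform

theorem fwdDiff_iter_truncPow_eq_sum (k : ℕ) {x : ℝ} (hx : 0 ≤ x) :
    (fwdDiff (1 : ℝ))^[k] (truncPow k) (x - k) =
      ∑ j ∈ Finset.range (⌊x⌋₊ + 1),
        (-1 : ℝ) ^ j * (k.choose j : ℝ) * ((x - j) ^ k / k.factorial) := by
  have h_expand := fwdDiff_iter_sub_nsmul_eq_sum (1 : ℝ) (truncPow k) k x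
  simp only [nsmul_one, zsmul_eq_mul, Int.cast_mul, Int.cast_pow, Int.cast_neg, Int.cast_one,
    Int.cast_natCast] at h_expand
  rw [h_expand]
  refine Finset.sum_congr_of_eq_on_inter (fun j _ hj => ?_) (fun j _ hj => ?_) fun j _ hj => ?_
  · have hxj : x < j := (Nat.floor_lt hx).mp (by simpa using hj)
    rw [truncPow.of_neg k (sub_neg.mpr hxj), mul_zero]
  · have hkj : k < j := by simpa using hj
    rw [Nat.choose_eq_zero_of_lt hkj, Nat.cast_zero, mul_zero, zero_mul]
  · have hjx : (j : ℝ) ≤ x := (Nat.le_floor_iff hx).mp (Finset.mem_range_succ_iff.mp hj)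
    rw [truncPow.of_nonneg k (sub_nonneg.mpr hjx)]

theorem stmt_2_general (k : ℕ) (μ : Measure (Fin k → ℝ))
    (hμ : μ = Measure.pi fun _ => unif 0 1) (x : ℝ) (hx0 : 0 ≤ x) :
    (μ {u | ∑ i, u i ≤ x}).toReal =
      (1 / (k.factorial : ℝ)) *
        ∑ j ∈ Finset.range (⌊x⌋₊ + 1), (-1 : ℝ) ^ j * (k.choose j : ℝ) * (x - j) ^ k := by
  rw [hμ, ← measureReal_def, measureReal_pi_unif_sum_le_eq_fwdDiff,
    fwdDiff_iter_truncPow_eq_sum k hx0, one_div_mul_eq_div, Finset.sum_div]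
  simp_rw [mul_div_assoc]

/-- Irwin–Hall CDF.  If `μ` is the product of `k` copies of the uniform
measure on `[0,1]`, then for `0 ≤ x ≤ k`,
`μ {u : ∑ u i ≤ x} = (1/k!) ∑_{j=0}^{⌊x⌋} (-1)^j C(k,j) (x-j)^k`. -/
theorem stmt_2 (k : ℕ) (hk : 1 ≤ k) (μ : Measure (Fin k → ℝ))
    (hμ : μ = Measure.pi fun _ => unif 0 1)
    (x : ℝ) (hx0 : 0 ≤ x) (hxk : x ≤ (k : ℝ)) :
    (μ {u | ∑ i, u i ≤ x}).toReal =
      (1 / (k.factorial : ℝ)) *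
        ∑ j ∈ Finset.range (⌊x⌋₊ + 1), (-1 : ℝ) ^ j * (k.choose j : ℝ) * (x - j) ^ k :=
  stmt_2_general k μ hμ x hx0
end

section
/- Let N ≥ 2, let 0 ≤ a < b, and let γ > 0 satisfy γ ≤ b and γ/(N−1) ≥ a. Let P be the product of N copies of the uniform probability measure on [a,b], let M_k(x) be the sum of the k largest coordinates of x ∈ [a,b]^N (M_0 = 0), and define the ordered stopping index k* as the least k ∈ {1,…,N} with M_k ≥ γ, with k* = N if no such k exists. Then E[k*] ≥ 1 + Σ_{k=1}^{N-1} ((γ/k − a)/(b − a))^N (the lower bound of Theorem 1). -/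
open MeasureTheory
open scoped Classical

/-- `sumKLargest N k x` is the sum of the `k` largest coordinates of `x : Fin N → ℝ`
(counted with multiplicity); it is `0` for `k = 0`. -/
noncomputable def sumKLargest (N k : ℕ) (x : Fin N → ℝ) : ℝ :=
  (((List.ofFn x).insertionSort (· ≥ ·)).take k).sum

/-!
Write `τ` for the ordered stopping index. Since `1 ≤ τ ≤ N`, layer-cake summation gives
`E[τ] = ∑_{k < N} P(k < τ) = 1 + ∑_{1 ≤ k < N} P(k < τ)`. If every coordinate of `x` is below
`γ / k`, then for each `1 ≤ j ≤ k` the `j` largest coordinates sum to less than `j * (γ / k) ≤ γ`,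
so `k < τ x`. For independent coordinates of common law `μ` this event has probability
`μ (-∞, γ / k) ^ N`, and for the uniform law `μ (-∞, γ / k) = (γ / k - a) / (b - a)`.
-/

section SumKLargest

variable {N k : ℕ} {x : Fin N → ℝ}

lemma exists_perm_antitone_comp {α : Type*} [LinearOrder α] (f : Fin N → α) :
    ∃ σ : Equiv.Perm (Fin N), Antitone (f ∘ σ) :=
  ⟨Tuple.sort (OrderDual.toDual ∘ f), Tuple.monotone_sort (OrderDual.toDual ∘ f)⟩

lemma sumKLargest_eq_sum_of_antitone {σ : Equiv.Perm (Fin N)} (hσ : Antitone (x ∘ σ)) :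
    sumKLargest N k x = ∑ i : Fin N with i.val < k, x (σ i) := by
  have sort_eq : (List.ofFn x).insertionSort (· ≥ ·) = List.ofFn (x ∘ σ) :=
    ((List.perm_insertionSort _ _).trans (σ.ofFn_comp_perm x).symm).eq_of_pairwise'
      (List.pairwise_insertionSort _ _) hσ.sortedGE_ofFn.pairwise
  simp only [sumKLargest, sort_eq, List.sum_take_ofFn, Function.comp_apply]

-- `sumKLargest N k` is linear on each of the finitely many closed cones
-- `{x | Antitone (x ∘ σ)}`, and these cover the space.
lemma continuous_sumKLargest (N k : ℕ) : Continuous (sumKLargest N k) := by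
  refine (locallyFinite_of_finite fun σ : Equiv.Perm (Fin N) ↦ {x : Fin N → ℝ | Antitone (x ∘ σ)})
    |>.continuous ?_ (fun σ ↦ ?_) fun σ ↦ ?_
  · exact Set.iUnion_eq_univ_iff.2 exists_perm_antitone_comp
  · exact isClosed_antitone.preimage (by fun_prop : Continuous fun x : Fin N → ℝ ↦ x ∘ σ)
  · have sum_continuous : Continuous fun x : Fin N → ℝ ↦ ∑ i : Fin N with i.val < k, x (σ i) := by
      fun_prop
    exact sum_continuous.continuousOn.congr fun x hx ↦ sumKLargest_eq_sum_of_antitone hx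

lemma sumKLargest_lt_mul {c : ℝ} (hk : k ≠ 0) (hkN : k ≤ N) (hx : ∀ i, x i < c) :
    sumKLargest N k x < k * c := by
  set l := ((List.ofFn x).insertionSort (· ≥ ·)).take k with hl
  have length_l : l.length = k := by simp [hl, hkN]
  have l_ne_nil : l ≠ [] := List.ne_nil_of_length_pos (by omega)
  have lt_of_mem_l : ∀ y ∈ l, y < c := fun y hy ↦ by
    have mem_ofFn : y ∈ List.ofFn x := (List.mem_insertionSort _).1 (List.mem_of_mem_take hy)
    obtain ⟨i, rfl⟩ := (List.mem_ofFn' x y).1 mem_ofFn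
    exact hx i
  calc l.sum = (l.map id).sum := by rw [List.map_id]
    _ < (l.map fun _ ↦ c).sum := List.sum_lt_sum_of_ne_nil l_ne_nil _ _ lt_of_mem_l
    _ = k * c := by rw [List.map_const', List.sum_replicate, length_l, nsmul_eq_mul]

end SumKLargest

section NatValued

variable {Ω : Type*} [MeasurableSpace Ω]

lemma integral_natCast_eq_sum_measureReal_lt {μ : Measure Ω} [IsFiniteMeasure μ] {f : Ω → ℕ}
    {n : ℕ} (hf : Measurable f) (hfn : ∀ ω, f ω ≤ n) :
    ∫ ω, (f ω : ℝ) ∂μ = ∑ k ∈ Finset.range n, μ.real {ω | k < f ω} := by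
  have measurableSet_lt_f (k : ℕ) : MeasurableSet {ω | k < f ω} := hf measurableSet_Ioi
  have layer_cake (ω : Ω) :
      (f ω : ℝ) = ∑ k ∈ Finset.range n, {ω | k < f ω}.indicator (fun _ ↦ (1 : ℝ)) ω := by
    have range_filter : {k ∈ Finset.range n | k < f ω} = Finset.range (f ω) := by
      ext k
      simpa using fun hk ↦ hk.trans_le (hfn ω)
    simp only [Set.indicator_apply, Set.mem_ofPred_eq, Finset.sum_boole, range_filter,
      Finset.card_range]
  simp_rw [layer_cake]
  rw [integral_finsetSum _ fun k _ ↦ (integrable_const _).indicator (measurableSet_lt_f k)]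
  exact Finset.sum_congr rfl fun k _ ↦ integral_indicator_one (measurableSet_lt_f k)

lemma measurable_hittingBtwn {β : Type*} [MeasurableSpace β] {u : ℕ → Ω → β} {s : Set β}
    (hu : ∀ i, Measurable (u i)) (hs : MeasurableSet s) (n m : ℕ) :
    Measurable (hittingBtwn u s n m) := by
  have isStoppingTime : IsStoppingTime (Filtration.const ℕ _ le_rfl)
      fun ω ↦ WithTop.some (hittingBtwn u s n m ω) :=
    Adapted.isStoppingTime_hittingBtwn (fun i ↦ hu i) hs
  refine measurable_of_Iic fun i ↦ ?_
  have measurableSet_hittingBtwn_le : MeasurableSet {ω | hittingBtwn u s n m ω ≤ i} := by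
    simpa only [WithTop.coe_le_coe] using Filtration.le _ i _ (isStoppingTime.measurableSet_le i)
  exact measurableSet_hittingBtwn_le

end NatValued

/-- The ordered stopping index `k*`: the least `k ∈ {1, …, N}` for which the `k` largest
coordinates sum to at least `γ`, and `N` if there is none. -/
noncomputable def orderedStoppingIndex (N : ℕ) (γ : ℝ) : (Fin N → ℝ) → ℕ :=
  hittingBtwn (sumKLargest N) (Set.Ici γ) 1 N

section OrderedStoppingIndex

variable {N k : ℕ} {γ : ℝ}

lemma orderedStoppingIndex_apply (N : ℕ) (γ : ℝ) (x : Fin N → ℝ) :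
    orderedStoppingIndex N γ x =
      if ∃ k, (1 ≤ k ∧ k ≤ N) ∧ γ ≤ sumKLargest N k x
      then sInf {k | (1 ≤ k ∧ k ≤ N) ∧ γ ≤ sumKLargest N k x}
      else N :=
  rfl

lemma measurable_orderedStoppingIndex (N : ℕ) (γ : ℝ) : Measurable (orderedStoppingIndex N γ) :=
  measurable_hittingBtwn (fun k ↦ (continuous_sumKLargest N k).measurable) measurableSet_Ici 1 N

lemma orderedStoppingIndex_pos (hN : N ≠ 0) (x : Fin N → ℝ) : 0 < orderedStoppingIndex N γ x :=
  le_hittingBtwn (Nat.one_le_iff_ne_zero.2 hN) x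

lemma lt_orderedStoppingIndex_of_forall_lt_div (hγ : 0 ≤ γ) (hk : k ≠ 0) (hkN : k < N)
    {x : Fin N → ℝ} (hx : ∀ i, x i < γ / k) : k < orderedStoppingIndex N γ x := by
  by_contra! hle
  obtain ⟨j, ⟨one_le_j, j_le_k⟩, γ_le_sum⟩ := (hittingBtwn_le_iff_of_lt k hkN).1 hle
  have sum_lt : sumKLargest N j x < γ :=
    calc sumKLargest N j x < j * (γ / k) := sumKLargest_lt_mul (by omega) (by omega) hx
      _ ≤ k * (γ / k) := by gcongr
      _ = γ := mul_div_cancel₀ γ (Nat.cast_ne_zero.2 hk)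
  exact γ_le_sum.not_gt sum_lt

theorem one_add_sum_measureReal_le_integral_orderedStoppingIndex (P : Measure (Fin N → ℝ))
    [IsProbabilityMeasure P] (hN : N ≠ 0) (hγ : 0 ≤ γ) :
    1 + ∑ k ∈ Finset.Icc 1 (N - 1), P.real {x | ∀ i, x i < γ / k} ≤
      ∫ x, (orderedStoppingIndex N γ x : ℝ) ∂P := by
  have Icc_eq_Ico : Finset.Icc 1 (N - 1) = Finset.Ico 1 N := by
    ext k
    simp only [Finset.mem_Icc, Finset.mem_Ico]
    omega
  rw [integral_natCast_eq_sum_measureReal_lt (measurable_orderedStoppingIndex N γ)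
      fun x ↦ hittingBtwn_le x, Finset.range_eq_Ico,
    Finset.sum_eq_sum_Ico_succ_bot (Nat.pos_of_ne_zero hN), Icc_eq_Ico]
  refine add_le_add ?_ (Finset.sum_le_sum fun k hk ↦ ?_)
  · simp [orderedStoppingIndex_pos hN]
  · obtain ⟨one_le_k, k_lt_N⟩ := Finset.mem_Ico.1 hk
    exact measureReal_mono fun x ↦
      lt_orderedStoppingIndex_of_forall_lt_div hγ (Nat.one_le_iff_ne_zero.1 one_le_k) k_lt_N

end OrderedStoppingIndex

lemma measureReal_pi_forall_mem {ι α : Type*} [Fintype ι] [MeasurableSpace α] (μ : Measure α)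
    [SigmaFinite μ] (s : Set α) :
    (Measure.pi fun _ : ι ↦ μ).real {x | ∀ i, x i ∈ s} = μ.real s ^ Fintype.card ι := by
  have setOf_eq_pi : {x : ι → α | ∀ i, x i ∈ s} = Set.univ.pi fun _ ↦ s := by ext x; simp
  simp [measureReal_def, setOf_eq_pi, Measure.pi_pi]

section Unif

variable {a b : ℝ}

lemma isProbabilityMeasure_unif (hab : a < b) : IsProbabilityMeasure (unif a b) :=
  ProbabilityTheory.cond_isProbabilityMeasure_of_finite (by simpa using hab) (by simp)

lemma measureReal_unif_Iio {c : ℝ} (hac : a ≤ c) (hcb : c ≤ b) :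
    (unif a b).real (Set.Iio c) = (c - a) / (b - a) := by
  have inter_eq : Set.Iio c ∩ Set.Icc a b = Set.Ico a c := by
    ext y
    simp only [Set.mem_inter_iff, Set.mem_Icc, Set.mem_Iio, Set.mem_Ico]
    exact ⟨fun h ↦ ⟨h.2.1, h.1⟩, fun h ↦ ⟨h.2, h.1, h.2.le.trans hcb⟩⟩
  calc (unif a b).real (Set.Iio c)
      = (volume.real (Set.Icc a b))⁻¹ * volume.real (Set.Ico a c) := by
        rw [unif, measureReal_ennreal_smul_apply, ENNReal.toReal_inv,
          measureReal_restrict_apply measurableSet_Iio, inter_eq, ← measureReal_def]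
    _ = (c - a) / (b - a) := by
        rw [Real.volume_real_Icc_of_le (hac.trans hcb), Real.volume_real_Ico_of_le hac,
          inv_mul_eq_div]

end Unif

theorem stmt_7_general {N : ℕ} (hN : 2 ≤ N) {a b γ : ℝ} (hab : a < b) (hγ : 0 ≤ γ) (hγb : γ ≤ b)
    (hγa : a ≤ γ / ((N - 1 : ℕ) : ℝ)) :
    1 + ∑ k ∈ Finset.Icc 1 (N - 1), ((γ / k - a) / (b - a)) ^ N ≤
      ∫ x, (orderedStoppingIndex N γ x : ℝ) ∂Measure.pi fun _ : Fin N ↦ unif a b := by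
  have := isProbabilityMeasure_unif hab
  have prob_forall_lt : ∀ k ∈ Finset.Icc 1 (N - 1),
      (Measure.pi fun _ : Fin N ↦ unif a b).real {x | ∀ i, x i < γ / k} =
        ((γ / k - a) / (b - a)) ^ N := fun k hk ↦ by
    obtain ⟨one_le_k, k_le⟩ := Finset.mem_Icc.1 hk
    have a_le : a ≤ γ / k := hγa.trans (by gcongr)
    have le_b : γ / k ≤ b := (div_le_self hγ (by exact_mod_cast one_le_k)).trans hγb
    rw [← measureReal_unif_Iio a_le le_b]
    simpa using measureReal_pi_forall_mem (ι := Fin N) (unif a b) (Set.Iio (γ / k))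
  rw [← Finset.sum_congr rfl prob_forall_lt]
  exact one_add_sum_measureReal_le_integral_orderedStoppingIndex _ (by omega) hγ

/-- Lower bound of Theorem 1: for the ordered sequential estimation scheme,
`E[k*] ≥ 1 + ∑_{k=1}^{N-1} ((γ/k - a)/(b - a))^N`. -/
theorem stmt_7 (N : ℕ) (hN : 2 ≤ N) (a b : ℝ) (ha : 0 ≤ a) (hab : a < b)
    (γ : ℝ) (hγ : 0 < γ) (hγb : γ ≤ b) (hγa : a ≤ γ / ((N - 1 : ℕ) : ℝ))
    (P : Measure (Fin N → ℝ)) (hP : P = Measure.pi fun _ => unif a b)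
    (kstar : (Fin N → ℝ) → ℕ)
    (hk : ∀ x, kstar x =
      if ∃ k, (1 ≤ k ∧ k ≤ N) ∧ γ ≤ sumKLargest N k x
      then sInf {k | (1 ≤ k ∧ k ≤ N) ∧ γ ≤ sumKLargest N k x}
      else N) :
    1 + ∑ k ∈ Finset.Icc 1 (N - 1), ((γ / k - a) / (b - a)) ^ N ≤
      ∫ x, (kstar x : ℝ) ∂P := by
  obtain rfl : kstar = orderedStoppingIndex N γ := funext fun x ↦
    (hk x).trans (orderedStoppingIndex_apply N γ x).symm
  exact hP ▸ stmt_7_general hN hab hγ.le hγb hγa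
end
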